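/- Let $X$ be a nonempty set, $\circ : X \times X \to X$ a binary operation, and $p, q > 0$ constants. Let $f_0, f_1, \dots, f_n : X \to \mathbb{R}$ be $(\circ, p, q)$-convex functions, and suppose $x_0 \in X$ satisfies $f_0(x_0) = 0$ and $x_0$ is a solution of the constrained optimization problem: minimize $f_0(x)$ subject to $f_1(x) \le 0, \dots, f_n(x) \le 0$ (i.e., $f_i(x_0) \le 0$ for $i = 1, \dots, n$, and $f_0(x_0) \le f_0(x)$ for every $x \in X$ with $f_1(x) \le 0, \dots, f_n(x) \le 0$). Then there exist $\lambda_0, \lambda_1, \dots, \lambda_n \ge 0$ with $\lambda_0 + \lambda_1 + \cdots + \lambda_n = 1$ such that the transversality conditions $\lambda_1 f_1(x_0) = \cdots = \lambda_n f_n(x_0) = 0$ hold and $0 \le \lambda_0 f_0(x) + \lambda_1 f_1(x) + \cdots + \lambda_n f_n(x)$ for all $x \in X$. -/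

import Mathlib

/-- A function `f : X → ℝ` is `(op, p, q)`-convex if `f (op x y) ≤ p * f x + q * f y`
for all `x, y`. -/
def PQConvex {X : Type*} (op : X → X → X) (p q : ℝ) (f : X → ℝ) : Prop :=
  ∀ x y : X, f (op x y) ≤ p * f x + q * f y

/-!
Put `r = p + q` and stack the functions into `F : X → ι → ℝ`, so that
`F (x ∘ y) ≤ p • F x + q • F y`. The set of vectors dominating a value of `F` need not be
convex, but iterating `x ↦ x ∘ x` shows that `r ^ k • F x` dominates a value of `F` for every
`k`. Hence the set of all `v` such that `r ^ k • v` eventually dominates a value of `F` contains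
the values of `F`, is stable under the single convex combination with weights `p / r` and `q / r`,
and therefore has convex closure. If no `x` makes all coordinates of `F x` negative, this closure
misses the open negative orthant, and the coefficients of a separating functional are, after
normalization, the multipliers. Complementary slackness follows by evaluating the multiplier
inequality at `x₀`.
-/

open AffineMap Filter Set Topology

section LineMapStable

theorem lineMap_pow_mem {𝕜 E : Type*} [CommRing 𝕜] [AddCommGroup E] [Module 𝕜 E] {s : Set E}
    {c : 𝕜} (hs : ∀ x ∈ s, ∀ y ∈ s, lineMap x y c ∈ s) {x y : E} (hx : x ∈ s) (hy : y ∈ s)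
    (n : ℕ) : lineMap x y (c ^ n) ∈ s := by
  induction n with
  | zero => simpa using hy
  | succ n ih => simpa only [lineMap_lineMap_right, pow_succ'] using hs x hx _ ih

theorem Icc_subset_of_isClosed_of_lineMap_mem {s : Set ℝ} (hs : IsClosed s) {c : ℝ}
    (hc : c ∈ Ioo 0 1) (h : ∀ x ∈ s, ∀ y ∈ s, lineMap x y c ∈ s) {a b : ℝ} (ha : a ∈ s)
    (hb : b ∈ s) : Icc a b ⊆ s := by
  refine (hs.inter isClosed_Icc).Icc_subset_of_forall_exists_gt ha ?_
  -- The points `lineMap x b (c ^ n)` lie in `s` and decrease to `x`, so `s` has no gap after `x`.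
  rintro x ⟨hx, -, hxb⟩ y hxy
  have htendsto : Tendsto (fun n : ℕ => lineMap x b (c ^ n)) atTop (𝓝 x) :=
    (lineMap_continuous.tendsto' 0 x (lineMap_apply_zero x b)).comp
      (tendsto_pow_atTop_nhds_zero_of_lt_one hc.1.le hc.2)
  obtain ⟨n, hn⟩ := (htendsto.eventually_le_const hxy).exists
  exact ⟨lineMap x b (c ^ n), lineMap_pow_mem h hx hb n,
    (left_lt_lineMap_iff_lt (pow_pos hc.1 n)).2 hxb, hn⟩

variable {E : Type*} [AddCommGroup E] [Module ℝ E] [TopologicalSpace E] [IsTopologicalAddGroup E]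
  [ContinuousSMul ℝ E] {s : Set E} {c : ℝ}

theorem convex_of_isClosed_of_lineMap_mem (hs : IsClosed s) (hc : c ∈ Ioo 0 1)
    (h : ∀ x ∈ s, ∀ y ∈ s, lineMap x y c ∈ s) : Convex ℝ s := by
  refine convex_iff_segment_subset.2 fun x hx y hy => ?_
  rw [segment_eq_image_lineMap, image_subset_iff]
  refine Icc_subset_of_isClosed_of_lineMap_mem (hs.preimage lineMap_continuous) hc
    (fun a ha b hb => ?_) (by simpa using hx) (by simpa using hy)
  rw [mem_preimage, apply_lineMap]
  exact h _ ha _ hb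

theorem convex_closure_of_lineMap_mem (hc : c ∈ Ioo 0 1)
    (h : ∀ x ∈ s, ∀ y ∈ s, lineMap x y c ∈ s) : Convex ℝ (closure s) := by
  refine convex_of_isClosed_of_lineMap_mem isClosed_closure hc fun x hx y hy => ?_
  have hcont : Continuous fun z : E × E => lineMap z.1 z.2 c := by
    simp only [coe_lineMap]
    fun_prop
  exact map_mem_closure₂ (f := fun u v : E => lineMap u v c) hcont hx hy h

end LineMapStable

section NegativeOrthant

theorem apply_le_of_forall_neg_apply_le {ι α : Type*} [TopologicalSpace α] [Preorder α]
    [ClosedIicTopology α] {φ : (ι → ℝ) → α} (hφ : Continuous φ) {a : α}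
    (h : ∀ v : ι → ℝ, (∀ i, v i < 0) → φ v ≤ a) {v : ι → ℝ} (hv : v ≤ 0) : φ v ≤ a := by
  have hmem : v ∈ closure (univ.pi fun _ => Iio (0 : ℝ)) := by
    rw [closure_pi_set]
    exact fun i _ => closure_Iio (0 : ℝ) ▸ hv i
  have hsub : univ.pi (fun _ => Iio 0) ⊆ φ ⁻¹' Iic a := fun u hu => h u fun i => hu i trivial
  exact closure_minimal hsub (isClosed_Iic.preimage hφ) hmem

theorem map_nonpos_of_forall_nonpos_map_le {M G : Type*} [AddCommMonoid M] [Preorder M]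
    [IsOrderedAddMonoid M] [AddCommGroup G] [LinearOrder G] [IsOrderedAddMonoid G]
    [Archimedean G] (φ : M →+ G) {a : G} (h : ∀ v ≤ 0, φ v ≤ a) {v : M} (hv : v ≤ 0) :
    φ v ≤ 0 := by
  by_contra! hpos
  obtain ⟨n, hn⟩ := exists_lt_nsmul hpos a
  rw [← map_nsmul] at hn
  exact hn.not_ge (h _ (nsmul_nonpos hv n))

variable {ι : Type*} [Fintype ι]

theorem inv_sum_smul_mem_stdSimplex {𝕜 : Type*} [Field 𝕜] [LinearOrder 𝕜]
    [IsStrictOrderedRing 𝕜] {w : ι → 𝕜} (hw : 0 < w) : (∑ i, w i)⁻¹ • w ∈ stdSimplex 𝕜 ι := by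
  have hsum : 0 < ∑ i, w i := Fintype.sum_pos hw
  refine ⟨fun i => mul_nonneg (inv_nonneg.2 hsum.le) (hw.le i), ?_⟩
  simp only [Pi.smul_apply, smul_eq_mul, ← Finset.mul_sum]
  exact inv_mul_cancel₀ hsum.ne'

theorem exists_pos_forall_dotProduct_nonneg {K : Set (ι → ℝ)} (hK : Convex ℝ K)
    (hne : K.Nonempty) (h : ∀ v ∈ K, ∃ i, 0 ≤ v i) :
    ∃ w : ι → ℝ, 0 < w ∧ ∀ v ∈ K, 0 ≤ w ⬝ᵥ v := by
  classical
  have hdisj : Disjoint (univ.pi fun _ : ι => Iio (0 : ℝ)) K :=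
    disjoint_left.2 fun v hneg hv => (h v hv).elim fun i hi => hi.not_gt (hneg i trivial)
  obtain ⟨φ, s, hφneg, hφK⟩ := geometric_hahn_banach_open
    (convex_pi fun _ _ => convex_Iio 0) (isOpen_set_pi finite_univ fun _ _ => isOpen_Iio) hK hdisj
  have hφle : ∀ v ≤ 0, φ v ≤ s := fun _ =>
    apply_le_of_forall_neg_apply_le φ.continuous fun u hu => (hφneg u fun i _ => hu i).le
  have hφ : ∀ v ≤ 0, φ v ≤ 0 := fun _ =>
    map_nonpos_of_forall_nonpos_map_le (φ : (ι → ℝ) →+ ℝ) hφle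
  have hs : 0 ≤ s := by simpa only [map_zero] using hφle 0 le_rfl
  obtain ⟨w, hw⟩ := (dotProductEquiv ℝ ι).surjective φ.toLinearMap
  have hφw : ∀ v, φ v = w ⬝ᵥ v := fun v => (LinearMap.congr_fun hw v).symm
  have hφneg_one : φ (-1) < s := hφneg _ fun i _ => by simp
  refine ⟨w, lt_of_le_of_ne (fun i => ?_) ?_, fun v hv => ?_⟩
  · have hi := hφ (-Pi.single i 1) (neg_nonpos.2 (Pi.single_nonneg.2 zero_le_one))
    simpa [hφw] using hi
  · rintro rfl
    obtain ⟨v, hv⟩ := hne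
    have hlt := hφneg_one.trans_le (hφK v hv)
    simp [hφw] at hlt
  · rw [← hφw]
    exact hs.trans (hφK v hv)

theorem exists_mem_stdSimplex_forall_dotProduct_nonneg {K : Set (ι → ℝ)} (hK : Convex ℝ K)
    (hne : K.Nonempty) (h : ∀ v ∈ K, ∃ i, 0 ≤ v i) :
    ∃ w ∈ stdSimplex ℝ ι, ∀ v ∈ K, 0 ≤ w ⬝ᵥ v := by
  obtain ⟨w, hw, hwK⟩ := exists_pos_forall_dotProduct_nonneg hK hne h
  refine ⟨_, inv_sum_smul_mem_stdSimplex hw, fun v hv => ?_⟩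
  rw [smul_dotProduct]
  exact smul_nonneg (inv_nonneg.2 (Finset.sum_nonneg fun i _ => hw.le i)) (hwK v hv)

end NegativeOrthant

/-- The vectors `v` such that `r ^ k • v` dominates a value of `F` for all large `k`. For a family
`F` of `(∘, p, q)`-convex functions and `r = p + q` it replaces the epigraph-like set
`{v | ∃ x, F x ≤ v}`, which need not be stable under any proper convex combination. Asking for all
large `k`, rather than some `k`, makes a common exponent available for two vectors. -/
def eventualEpigraph {X E : Type*} [LE E] [SMul ℝ E] (r : ℝ) (F : X → E) : Set E :=
  {v | ∀ᶠ k : ℕ in atTop, ∃ x, F x ≤ r ^ k • v}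

section EventualEpigraph

variable {X E : Type*} [AddCommGroup E] [PartialOrder E] [Module ℝ E] [PosSMulMono ℝ E]
  {op : X → X → X} {p q : ℝ} {F : X → E}

theorem mem_eventualEpigraph (hpq : 0 ≤ p + q) (hF : ∀ x y, F (op x y) ≤ p • F x + q • F y)
    (x : X) : F x ∈ eventualEpigraph (p + q) F := by
  refine Eventually.of_forall fun k => ?_
  induction k with
  | zero => exact ⟨x, by simp⟩
  | succ k ih =>
    obtain ⟨y, hy⟩ := ih
    refine ⟨op y y, ?_⟩
    calc F (op y y) ≤ p • F y + q • F y := hF y y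
      _ = (p + q) • F y := (add_smul p q _).symm
      _ ≤ (p + q) • (p + q) ^ k • F x := smul_le_smul_of_nonneg_left hy hpq
      _ = (p + q) ^ (k + 1) • F x := by rw [smul_smul, pow_succ']

variable [IsOrderedAddMonoid E]

theorem lineMap_mem_eventualEpigraph (hp : 0 < p) (hq : 0 < q)
    (hF : ∀ x y, F (op x y) ≤ p • F x + q • F y) {u v : E}
    (hu : u ∈ eventualEpigraph (p + q) F) (hv : v ∈ eventualEpigraph (p + q) F) :
    lineMap u v (q / (p + q)) ∈ eventualEpigraph (p + q) F := by
  have hscale : (p + q) • lineMap u v (q / (p + q)) = p • u + q • v := by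
    rw [lineMap_apply_module]
    match_scalars <;> field_simp
    ring
  rw [eventualEpigraph, mem_ofPred_eq, ← map_add_atTop_eq_nat 1, eventually_map]
  filter_upwards [hu, hv] with k ⟨x, hx⟩ ⟨y, hy⟩
  refine ⟨op x y, ?_⟩
  calc F (op x y) ≤ p • F x + q • F y := hF x y
    _ ≤ p • (p + q) ^ k • u + q • (p + q) ^ k • v :=
      add_le_add (smul_le_smul_of_nonneg_left hx hp.le) (smul_le_smul_of_nonneg_left hy hq.le)
    _ = (p + q) ^ k • (p • u + q • v) := by module
    _ = (p + q) ^ (k + 1) • lineMap u v (q / (p + q)) := by rw [← hscale, smul_smul, pow_succ]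

theorem convex_closure_eventualEpigraph [TopologicalSpace E] [IsTopologicalAddGroup E]
    [ContinuousSMul ℝ E] (hp : 0 < p) (hq : 0 < q)
    (hF : ∀ x y, F (op x y) ≤ p • F x + q • F y) :
    Convex ℝ (closure (eventualEpigraph (p + q) F)) := by
  have hc : q / (p + q) ∈ Ioo 0 1 :=
    ⟨by positivity, (div_lt_one (by positivity)).2 (lt_add_of_pos_left q hp)⟩
  exact convex_closure_of_lineMap_mem hc fun _ hu _ hv =>
    lineMap_mem_eventualEpigraph hp hq hF hu hv

theorem exists_nonneg_of_mem_closure_eventualEpigraph {ι : Type*} [Finite ι] {F : X → ι → ℝ}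
    {r : ℝ} (hr : 0 < r) (h : ∀ x, ∃ i, 0 ≤ F x i) {v : ι → ℝ}
    (hv : v ∈ closure (eventualEpigraph r F)) : ∃ i, 0 ≤ v i := by
  have hclosed : IsClosed {v : ι → ℝ | ∃ i, 0 ≤ v i} := by
    simp only [ofPred_exists]
    exact isClosed_iUnion_of_finite fun i => isClosed_le continuous_const (continuous_apply i)
  refine closure_minimal (fun u hu => ?_) hclosed hv
  obtain ⟨k, x, hx⟩ := Eventually.exists hu
  obtain ⟨i, hi⟩ := h x
  exact ⟨i, nonneg_of_mul_nonneg_right (hi.trans (hx i)) (pow_pos hr k)⟩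

end EventualEpigraph

theorem PQConvex.exists_mem_stdSimplex_forall_nonneg {X ι : Type*} [Nonempty X]
    [Fintype ι] {op : X → X → X} {p q : ℝ} (hp : 0 < p) (hq : 0 < q) {F : X → ι → ℝ}
    (hF : ∀ i, PQConvex op p q fun x => F x i) (h : ∀ x, ∃ i, 0 ≤ F x i) :
    ∃ w ∈ stdSimplex ℝ ι, ∀ x, 0 ≤ w ⬝ᵥ F x := by
  have hFvec : ∀ x y, F (op x y) ≤ p • F x + q • F y := fun x y i => hF i x y
  have hpq : 0 < p + q := add_pos hp hq
  have hmem : ∀ x, F x ∈ closure (eventualEpigraph (p + q) F) := fun x =>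
    subset_closure (mem_eventualEpigraph hpq.le hFvec x)
  obtain ⟨w, hw, hwF⟩ := exists_mem_stdSimplex_forall_dotProduct_nonneg
    (convex_closure_eventualEpigraph hp hq hFvec) ⟨_, hmem (Classical.arbitrary X)⟩
    fun _ => exists_nonneg_of_mem_closure_eventualEpigraph hpq h
  exact ⟨w, hw, fun x => hwF _ (hmem x)⟩

theorem mul_eq_zero_of_sum_mul_nonneg {ι R : Type*} [Fintype ι] [Ring R] [PartialOrder R]
    [IsOrderedRing R] {w g : ι → R} (hw : ∀ i, 0 ≤ w i) (hg : ∀ i, g i ≤ 0)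
    (h : 0 ≤ ∑ i, w i * g i) (i : ι) : w i * g i = 0 := by
  have hterm : ∀ j ∈ Finset.univ, w j * g j ≤ 0 := fun j _ =>
    mul_nonpos_of_nonneg_of_nonpos (hw j) (hg j)
  have hsum : ∑ j, w j * g j = 0 := (Finset.sum_nonpos hterm).antisymm h
  exact (Finset.sum_eq_zero_iff_of_nonpos hterm).1 hsum i (Finset.mem_univ i)

/-- Karush–Kuhn–Tucker theorem for `(∘, p, q)`-convex functions: necessity of the
multiplier rule and the transversality conditions. -/
theorem kkt_necessity_pqConvex
    {X : Type*} [Nonempty X] (circ : X → X → X) {p q : ℝ} (hp : 0 < p) (hq : 0 < q)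
    {n : ℕ} (f0 : X → ℝ) (f : Fin n → X → ℝ)
    (hconv0 : PQConvex circ p q f0) (hconv : ∀ i, PQConvex circ p q (f i))
    {x0 : X} (hx0 : f0 x0 = 0) (hadm : ∀ i, f i x0 ≤ 0)
    (hmin : ∀ x : X, (∀ i, f i x ≤ 0) → f0 x0 ≤ f0 x) :
    ∃ (lam0 : ℝ) (lam : Fin n → ℝ), 0 ≤ lam0 ∧ (∀ i, 0 ≤ lam i) ∧
      (lam0 + ∑ i, lam i = 1) ∧ (∀ i, lam i * f i x0 = 0) ∧
      ∀ x : X, 0 ≤ lam0 * f0 x + ∑ i, lam i * f i x := by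
  have hnonneg : ∀ x, ∃ i, 0 ≤ (Fin.cons (f0 x) (f · x) : Fin (n + 1) → ℝ) i := fun x => by
    rw [Fin.exists_fin_succ]
    by_contra! hneg
    exact hneg.1.not_ge (hx0.ge.trans (hmin x fun i => (hneg.2 i).le))
  obtain ⟨lam, ⟨hlam, hsum⟩, hmult⟩ :=
    PQConvex.exists_mem_stdSimplex_forall_nonneg hp hq
      (Fin.forall_fin_succ.2 ⟨hconv0, hconv⟩) hnonneg
  simp only [dotProduct, Fin.sum_univ_succ, Fin.cons_zero, Fin.cons_succ] at hsum hmult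
  have hmult0 : 0 ≤ ∑ i : Fin n, lam i.succ * f i x0 := by simpa [hx0] using hmult x0
  exact ⟨lam 0, fun i => lam i.succ, hlam 0, fun i => hlam i.succ, hsum,
    mul_eq_zero_of_sum_mul_nonneg (fun i => hlam i.succ) hadm hmult0, hmult⟩
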